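/- For every integer n ≥ 1, the unrefined ASM generating function with bulk parameters related by y = x+1 satisfies Z_n(x,x+1) = (x+1)^{n(n−1)/2}, as an identity of polynomials in ℤ[x]. In other words, Σ_{A an ASM of size n} x^{ν(A)}·(x+1)^{μ(A)} = (x+1)^{n(n−1)/2}. -/

import Mathlib

open Finset

/-- The `n × n` integer matrix encoded by `e`, with entries in `{-1, 0, 1}`. -/
def asmMat {n : ℕ} (e : Fin n → Fin n → Fin 3) : Fin n → Fin n → ℤ :=
  fun i j => (e i j : ℤ) - 1

/-- `A` is an alternating sign matrix: all entries lie in `{-1, 0, 1}`, every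
partial row sum and every partial column sum is `0` or `1` (equivalently, the
nonzero entries of each row and of each column alternate in sign), and every
complete row sum and column sum is `1`. -/
def IsASM {n : ℕ} (A : Fin n → Fin n → ℤ) : Prop :=
  (∀ i j, A i j = -1 ∨ A i j = 0 ∨ A i j = 1) ∧
  (∀ (i j : Fin n), (∑ j' ∈ univ.filter (fun j' : Fin n => j' ≤ j), A i j') = 0 ∨
    (∑ j' ∈ univ.filter (fun j' : Fin n => j' ≤ j), A i j') = 1) ∧
  (∀ (i j : Fin n), (∑ i' ∈ univ.filter (fun i' : Fin n => i' ≤ i), A i' j) = 0 ∨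
    (∑ i' ∈ univ.filter (fun i' : Fin n => i' ≤ i), A i' j) = 1) ∧
  (∀ i : Fin n, (∑ j, A i j) = 1) ∧
  (∀ j : Fin n, (∑ i, A i j) = 1)

/-- `ν(A)`, the number of generalized inversions of `A`. -/
def nuASM {n : ℕ} (A : Fin n → Fin n → ℤ) : ℕ :=
  (∑ i : Fin n, ∑ i' : Fin n, ∑ j : Fin n, ∑ j' : Fin n,
      if i < i' ∧ j' ≤ j then A i j * A i' j' else 0).toNat

/-- `μ(A)`, the number of entries of `A` equal to `-1`. -/
def muASM {n : ℕ} (A : Fin n → Fin n → ℤ) : ℕ :=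
  (univ.filter (fun p : Fin n × Fin n => A p.1 p.2 = -1)).card

/-- `ρT(A)`, the number of `0`'s to the left of the `1` in the top row of `A`. -/
def rhoT {n : ℕ} (A : Fin n → Fin n → ℤ) : ℕ :=
  (univ.filter (fun j : Fin n =>
    A ⟨0, j.pos⟩ j = 0 ∧ ∃ j' : Fin n, j < j' ∧ A ⟨0, j.pos⟩ j' = 1)).card

/-- `ρR(A)`, the number of `0`'s below the `1` in the right-most column of `A`. -/
def rhoR {n : ℕ} (A : Fin n → Fin n → ℤ) : ℕ :=
  (univ.filter (fun i : Fin n =>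
    A i ⟨n - 1, Nat.sub_lt i.pos Nat.one_pos⟩ = 0 ∧
      ∃ i' : Fin n, i' < i ∧ A i' ⟨n - 1, Nat.sub_lt i.pos Nat.one_pos⟩ = 1)).card

/-- `ρB(A)`, the number of `0`'s to the right of the `1` in the bottom row of `A`. -/
def rhoB {n : ℕ} (A : Fin n → Fin n → ℤ) : ℕ :=
  (univ.filter (fun j : Fin n =>
    A ⟨n - 1, Nat.sub_lt j.pos Nat.one_pos⟩ j = 0 ∧
      ∃ j' : Fin n, j' < j ∧ A ⟨n - 1, Nat.sub_lt j.pos Nat.one_pos⟩ j' = 1)).card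

/-- `ρL(A)`, the number of `0`'s above the `1` in the left-most column of `A`. -/
def rhoL {n : ℕ} (A : Fin n → Fin n → ℤ) : ℕ :=
  (univ.filter (fun i : Fin n =>
    A i ⟨0, i.pos⟩ = 0 ∧ ∃ i' : Fin n, i < i' ∧ A i' ⟨0, i.pos⟩ = 1)).card

open Classical in
/-- The quadruply-refined ASM generating function
`Zqua_n(x,y;z1,z2,z3,z4) = Σ_A x^{ν(A)} y^{μ(A)} z1^{ρT(A)} z2^{ρR(A)} z3^{ρB(A)} z4^{ρL(A)}`. -/
noncomputable def Zqua (n : ℕ) {R : Type*} [CommRing R] (x y z1 z2 z3 z4 : R) : R :=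
  ∑ e : Fin n → Fin n → Fin 3,
    if IsASM (asmMat e) then
      x ^ nuASM (asmMat e) * y ^ muASM (asmMat e) * z1 ^ rhoT (asmMat e) *
        z2 ^ rhoR (asmMat e) * z3 ^ rhoB (asmMat e) * z4 ^ rhoL (asmMat e)
    else 0

/-- Adjacent-boundary doubly-refined generating function `Zadj_n(x,y;z1,z2)`. -/
noncomputable def Zadj (n : ℕ) {R : Type*} [CommRing R] (x y z1 z2 : R) : R :=
  Zqua n x y z1 1 1 z2

/-- Alternative adjacent-boundary doubly-refined generating function `Zbaradj_n(x,y;z1,z2)`. -/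
noncomputable def Zbaradj (n : ℕ) {R : Type*} [CommRing R] (x y z1 z2 : R) : R :=
  Zqua n x y z1 z2 1 1

/-- Triply-refined generating function `Ztri_n(x,y;z1,z2,z3)`. -/
noncomputable def Ztri (n : ℕ) {R : Type*} [CommRing R] (x y z1 z2 z3 : R) : R :=
  Zqua n x y z1 1 z2 z3

/-- Opposite-boundary doubly-refined generating function `Zopp_n(x,y;z1,z2)`. -/
noncomputable def Zopp (n : ℕ) {R : Type*} [CommRing R] (x y z1 z2 : R) : R :=
  Zqua n x y z1 1 z2 1

/-- Singly-refined generating function `Z_n(x,y;z)`. -/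
noncomputable def Zsing (n : ℕ) {R : Type*} [CommRing R] (x y z : R) : R :=
  Zqua n x y z 1 1 1

/-- Unrefined generating function `Z_n(x,y)`.  Note `Zun 0 x y = 1`. -/
noncomputable def Zun (n : ℕ) {R : Type*} [CommRing R] (x y : R) : R :=
  Zqua n x y 1 1 1 1

/-!
The argument is the compatible-pair recursion of Elkies, Kuperberg, Larsen and Propp, refined by
inversions. An alternating sign matrix is encoded by its corner sums, an array with fixed boundary
values and increments in `{0, 1}`. Say that corner-sum matrices `c` of size `n` and `d` of size
`n + 1` interlace if every entry of `c`, placed over a cell of `d`, lies between bounds given by the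
corners of that cell, and give such a pair the weight `x ^ ∑ (c i j - d i j)`. With one matrix
fixed, the entries of the other vary independently in intervals with at most two elements, so the
sum of the weights factors over cells. For fixed `d` it is `x ^ ν * (x + 1) ^ μ`; for fixed `c` the
entries `1` take the place of the entries `-1`, and since there are `n` more of them it is
`(x + 1) ^ n * x ^ ν * (x + 1) ^ μ`. Comparing the two sums over all pairs gives
`Z_{n+1}(x, x+1) = (x + 1) ^ n * Z_n(x, x+1)`.
-/

section CornerSum

variable {n : ℕ}

lemma sum_filter_castSucc_lt_succ {M : Type*} [AddCommMonoid M] (f : Fin n → M) (i : Fin n) :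
    ∑ k with k.castSucc < i.succ, f k = (∑ k with k.castSucc < i.castSucc, f k) + f i := by
  rw [add_comm (∑ k with _, f k), ← sum_insert (by simp)]
  exact sum_congr (by ext k; simp [le_iff_eq_or_lt]) fun _ _ => rfl

/-- The corner-sum matrix of `A`: its entry at `(i, j)` is the sum of the entries of `A` in the
first `i` rows and the first `j` columns, so that it has one more row and column than `A`. -/
def cornerSum (A : Fin n → Fin n → ℤ) (i j : Fin (n + 1)) : ℤ :=
  ∑ i' with i'.castSucc < i, ∑ j' with j'.castSucc < j, A i' j'

/-- The mixed second difference of `c`, which recovers a matrix from its corner sums. -/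
def mixedDiff (c : Fin (n + 1) → Fin (n + 1) → ℤ) (i j : Fin n) : ℤ :=
  c i.castSucc j.castSucc + c i.succ j.succ - c i.castSucc j.succ - c i.succ j.castSucc

/-- The increments of `c` along the diagonals of its cells. -/
def diagDiff (c : Fin (n + 1) → Fin (n + 1) → ℤ) (i j : Fin n) : ℤ :=
  c i.succ j.succ - c i.castSucc j.castSucc

@[simp] lemma cornerSum_zero_left (A : Fin n → Fin n → ℤ) (j : Fin (n + 1)) :
    cornerSum A 0 j = 0 := by
  simp [cornerSum]

@[simp] lemma cornerSum_zero_right (A : Fin n → Fin n → ℤ) (i : Fin (n + 1)) :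
    cornerSum A i 0 = 0 := by
  simp [cornerSum]

lemma cornerSum_succ_left (A : Fin n → Fin n → ℤ) (i : Fin n) (j : Fin (n + 1)) :
    cornerSum A i.succ j = cornerSum A i.castSucc j + ∑ j' with j'.castSucc < j, A i j' :=
  sum_filter_castSucc_lt_succ _ i

lemma cornerSum_succ_right (A : Fin n → Fin n → ℤ) (i : Fin (n + 1)) (j : Fin n) :
    cornerSum A i j.succ = cornerSum A i j.castSucc + ∑ i' with i'.castSucc < i, A i' j := by
  simp only [cornerSum, sum_filter_castSucc_lt_succ, sum_add_distrib]

lemma mixedDiff_cornerSum (A : Fin n → Fin n → ℤ) : mixedDiff (cornerSum A) = A := by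
  funext i j
  rw [mixedDiff, cornerSum_succ_left, cornerSum_succ_left, sum_filter_castSucc_lt_succ]
  ring

lemma cornerSum_injective : Function.Injective (cornerSum (n := n)) :=
  Function.LeftInverse.injective mixedDiff_cornerSum

lemma sum_mixedDiff_row {c : Fin (n + 1) → Fin (n + 1) → ℤ} (hleft : ∀ i, c i 0 = 0)
    (i : Fin n) (j : Fin (n + 1)) :
    ∑ j' with j'.castSucc < j, mixedDiff c i j' = c i.succ j - c i.castSucc j := by
  induction j using Fin.induction with
  | zero => simp [hleft]
  | succ j ih =>
    rw [sum_filter_castSucc_lt_succ, ih, mixedDiff]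
    ring

lemma cornerSum_mixedDiff {c : Fin (n + 1) → Fin (n + 1) → ℤ} (hleft : ∀ i, c i 0 = 0)
    (htop : ∀ j, c 0 j = 0) : cornerSum (mixedDiff c) = c := by
  funext i j
  induction i using Fin.induction with
  | zero => rw [cornerSum_zero_left, htop]
  | succ i ih => rw [cornerSum_succ_left, ih, sum_mixedDiff_row hleft, add_sub_cancel]

end CornerSum

section CornerSumMatrices

variable {n : ℕ}

/-- The boundary values of the corner-sum matrix of an `n × n` alternating sign matrix. -/
structure HasCornerBoundary (c : Fin (n + 1) → Fin (n + 1) → ℤ) : Prop where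
  left : ∀ i, c i 0 = 0
  top : ∀ j, c 0 j = 0
  right : ∀ i, c i (Fin.last n) = (i : ℕ)
  bottom : ∀ j, c (Fin.last n) j = (j : ℕ)

/-- The characterization of corner-sum matrices of `n × n` alternating sign matrices: prescribed
boundary values, and increments in `{0, 1}` along rows and columns. -/
structure IsCornerSum (c : Fin (n + 1) → Fin (n + 1) → ℤ) : Prop extends HasCornerBoundary c where
  row : ∀ i (j : Fin n), c i j.castSucc ≤ c i j.succ ∧ c i j.succ ≤ c i j.castSucc + 1
  col : ∀ (i : Fin n) j, c i.castSucc j ≤ c i.succ j ∧ c i.succ j ≤ c i.castSucc j + 1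

lemma sum_filter_le_row (A : Fin n → Fin n → ℤ) (i j : Fin n) :
    ∑ j' with j' ≤ j, A i j' = cornerSum A i.succ j.succ - cornerSum A i.castSucc j.succ := by
  simp [cornerSum_succ_left]

lemma sum_filter_le_col (A : Fin n → Fin n → ℤ) (i j : Fin n) :
    ∑ i' with i' ≤ i, A i' j = cornerSum A i.succ j.succ - cornerSum A i.succ j.castSucc := by
  simp [cornerSum_succ_right]

lemma sum_filter_lt_col (A : Fin n → Fin n → ℤ) (i j : Fin n) :
    ∑ i' with i' < i, A i' j =
      cornerSum A i.castSucc j.succ - cornerSum A i.castSucc j.castSucc := by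
  simp [cornerSum_succ_right]

lemma sum_row (A : Fin n → Fin n → ℤ) (i : Fin n) :
    ∑ j, A i j = cornerSum A i.succ (Fin.last n) - cornerSum A i.castSucc (Fin.last n) := by
  simp [cornerSum_succ_left, Fin.castSucc_lt_last]

lemma sum_col (A : Fin n → Fin n → ℤ) (j : Fin n) :
    ∑ i, A i j = cornerSum A (Fin.last n) j.succ - cornerSum A (Fin.last n) j.castSucc := by
  simp [cornerSum_succ_right, Fin.castSucc_lt_last]

lemma IsASM.isCornerSum_cornerSum {A : Fin n → Fin n → ℤ} (hA : IsASM A) :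
    IsCornerSum (cornerSum A) := by
  obtain ⟨-, hrow, hcol, hrow_sum, hcol_sum⟩ := hA
  simp only [sum_filter_le_row, sum_filter_le_col, sum_row, sum_col] at hrow hcol hrow_sum hcol_sum
  refine ⟨⟨cornerSum_zero_right A, cornerSum_zero_left A, fun i => ?_, fun j => ?_⟩,
    fun i j => ?_, fun i j => ?_⟩
  · induction i using Fin.induction with
    | zero => simp
    | succ i ih =>
      have := hrow_sum i
      simp only [Fin.val_castSucc, Fin.val_succ] at ih ⊢
      lia
  · induction j using Fin.induction with
    | zero => simp
    | succ j ih =>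
      have := hcol_sum j
      simp only [Fin.val_castSucc, Fin.val_succ] at ih ⊢
      lia
  · cases i using Fin.cases with
    | zero => simp
    | succ i => have := hcol i j; lia
  · cases j using Fin.cases with
    | zero => simp
    | succ j => have := hrow i j; lia

lemma IsCornerSum.isASM_of_cornerSum {A : Fin n → Fin n → ℤ} (h : IsCornerSum (cornerSum A)) :
    IsASM A := by
  unfold IsASM
  simp only [sum_filter_le_row, sum_filter_le_col, sum_row, sum_col]
  refine ⟨fun i j => ?_, fun i j => ?_, fun i j => ?_, fun i => ?_, fun j => ?_⟩
  · have hentry := congrFun₂ (mixedDiff_cornerSum A) i j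
    have hrow := h.row i.castSucc j
    have hrow' := h.row i.succ j
    simp only [mixedDiff] at hentry
    lia
  · have := h.col i j.succ
    lia
  · have := h.row i.succ j
    lia
  · simp [h.right]
  · simp [h.bottom]

lemma asmMat_injective : Function.Injective (asmMat (n := n)) := by
  intro e e' h
  funext i j
  have hij := congrFun₂ h i j
  simp only [asmMat] at hij
  omega

lemma IsASM.exists_asmMat_eq {A : Fin n → Fin n → ℤ} (hA : IsASM A) : ∃ e, asmMat e = A := by
  have hentry (i j : Fin n) : ∃ k : Fin 3, (k : ℤ) - 1 = A i j := by
    obtain h | h | h := hA.1 i j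
    · exact ⟨0, by simp [h]⟩
    · exact ⟨1, by simp [h]⟩
    · exact ⟨2, by simp [h]⟩
  choose e he using hentry
  exact ⟨e, funext₂ he⟩

open Classical in
/-- The finite set of corner-sum matrices of `n × n` alternating sign matrices. -/
noncomputable def cornerSums (n : ℕ) : Finset (Fin (n + 1) → Fin (n + 1) → ℤ) :=
  ({e | IsASM (asmMat e)} : Finset (Fin n → Fin n → Fin 3)).image fun e => cornerSum (asmMat e)

lemma mem_cornerSums {c : Fin (n + 1) → Fin (n + 1) → ℤ} : c ∈ cornerSums n ↔ IsCornerSum c := by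
  simp only [cornerSums, mem_image, mem_filter_univ]
  constructor
  · rintro ⟨e, he, rfl⟩
    exact he.isCornerSum_cornerSum
  · intro hc
    have hcs : cornerSum (mixedDiff c) = c := cornerSum_mixedDiff hc.left hc.top
    have hasm : IsASM (mixedDiff c) := IsCornerSum.isASM_of_cornerSum (by rwa [hcs])
    obtain ⟨e, he⟩ := hasm.exists_asmMat_eq
    exact ⟨e, by rwa [he], by rw [he, hcs]⟩

lemma IsCornerSum.sum_mixedDiff {c : Fin (n + 1) → Fin (n + 1) → ℤ} (hc : IsCornerSum c) :
    ∑ i, ∑ j, mixedDiff c i j = n := by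
  simp [sum_row, cornerSum_mixedDiff hc.left hc.top, hc.right]

end CornerSumMatrices

section Interlacing

variable {n : ℕ}

/-- The interval of values at the centre of the cell `(i, j)` of `d` that are allowed for an
interlacing array with one row and one column less. -/
noncomputable def predRange (d : Fin (n + 1) → Fin (n + 1) → ℤ) (i j : Fin n) : Finset ℤ :=
  Icc (max (d i.castSucc j.castSucc) (d i.succ j.succ - 1))
    (min (d i.castSucc j.succ) (d i.succ j.castSucc))

/-- The interval of values at the centre of the cell `(i, j)` of `c` that are allowed for an
interlacing array with one row and one column more. -/
noncomputable def succRange (c : Fin (n + 1) → Fin (n + 1) → ℤ) (i j : Fin n) : Finset ℤ :=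
  Icc (max (c i.castSucc j.succ) (c i.succ j.castSucc))
    (min (c i.succ j.succ) (c i.castSucc j.castSucc + 1))

/-- The interlacing relation between arrays of consecutive sizes. For corner-sum matrices it is the
compatibility relation between alternating sign matrices of sizes `n` and `n + 1`. -/
def Interlaces (c : Fin (n + 1) → Fin (n + 1) → ℤ) (d : Fin (n + 2) → Fin (n + 2) → ℤ) : Prop :=
  ∀ i j, c i j ∈ predRange d i j

lemma mem_succRange {c : Fin (n + 1) → Fin (n + 1) → ℤ} {i j : Fin n} {v : ℤ} :
    v ∈ succRange c i j ↔ (c i.castSucc j.succ ≤ v ∧ c i.succ j.castSucc ≤ v) ∧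
      v ≤ c i.succ j.succ ∧ v ≤ c i.castSucc j.castSucc + 1 := by
  simp only [succRange, mem_Icc, max_le_iff, le_min_iff]

lemma interlaces_iff {c : Fin (n + 1) → Fin (n + 1) → ℤ} {d : Fin (n + 2) → Fin (n + 2) → ℤ} :
    Interlaces c d ↔ ∀ i j, (d i.castSucc j.castSucc ≤ c i j ∧ d i.succ j.succ - 1 ≤ c i j) ∧
      c i j ≤ d i.castSucc j.succ ∧ c i j ≤ d i.succ j.castSucc := by
  simp only [Interlaces, predRange, mem_Icc, max_le_iff, le_min_iff]

lemma Interlaces.isCornerSum_left {c : Fin (n + 1) → Fin (n + 1) → ℤ}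
    {d : Fin (n + 2) → Fin (n + 2) → ℤ} (h : Interlaces c d) (hd : HasCornerBoundary d) :
    IsCornerSum c := by
  rw [interlaces_iff] at h
  refine ⟨⟨fun i => ?_, fun j => ?_, fun i => ?_, fun j => ?_⟩, fun i j => ?_, fun i j => ?_⟩
  · have := h i 0
    have := hd.left i.castSucc
    have := hd.left i.succ
    simp only [Fin.castSucc_zero] at *
    lia
  · have := h 0 j
    have := hd.top j.castSucc
    have := hd.top j.succ
    simp only [Fin.castSucc_zero] at *
    lia
  · have := h i (Fin.last n)
    have := hd.right i.castSucc
    have := hd.right i.succ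
    simp only [Fin.succ_last, Fin.val_castSucc, Fin.val_succ] at *
    lia
  · have := h (Fin.last n) j
    have := hd.bottom j.castSucc
    have := hd.bottom j.succ
    simp only [Fin.succ_last, Fin.val_castSucc, Fin.val_succ] at *
    lia
  · have := h i j.castSucc
    have := h i j.succ
    simp only [Fin.succ_castSucc] at *
    lia
  · have := h i.castSucc j
    have := h i.succ j
    simp only [Fin.succ_castSucc] at *
    lia

lemma Interlaces.isCornerSum_right {c : Fin (n + 1) → Fin (n + 1) → ℤ}
    {d : Fin (n + 2) → Fin (n + 2) → ℤ} (h : Interlaces c d) (hd : HasCornerBoundary d) :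
    IsCornerSum d := by
  rw [interlaces_iff] at h
  refine ⟨hd, fun i j => ⟨?_, ?_⟩, fun i j => ⟨?_, ?_⟩⟩
  · cases i using Fin.lastCases with
    | last => simp [hd.bottom]
    | cast i => have := h i j; lia
  · cases i using Fin.cases with
    | zero => simp [hd.top]
    | succ i => have := h i j; lia
  · cases j using Fin.lastCases with
    | last => simp [hd.right]
    | cast j => have := h i j; lia
  · cases j using Fin.cases with
    | zero => simp [hd.left]
    | succ j => have := h i j; lia

/-- The array `d` without its four boundary lines. -/
def innerPart (d : Fin (n + 2) → Fin (n + 2) → ℤ) (i j : Fin n) : ℤ :=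
  d i.succ.castSucc j.succ.castSucc

/-- The array with inner part `v` and the boundary values of a corner-sum matrix. -/
def cornerFrame (v : Fin n → Fin n → ℤ) : Fin (n + 2) → Fin (n + 2) → ℤ :=
  Fin.cons 0 (Fin.snoc (fun i => Fin.cons 0 (Fin.snoc (v i) (i + 1 : ℤ))) fun j => (j : ℕ))

lemma hasCornerBoundary_cornerFrame (v : Fin n → Fin n → ℤ) :
    HasCornerBoundary (cornerFrame v) := by
  refine ⟨fun i => ?_, fun j => ?_, fun i => ?_, fun j => ?_⟩
  · cases i using Fin.cases with
    | zero => simp [cornerFrame]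
    | succ i => cases i using Fin.lastCases <;> simp [cornerFrame]
  · simp [cornerFrame]
  · cases i using Fin.cases with
    | zero => simp [cornerFrame]
    | succ i => cases i using Fin.lastCases <;> simp [cornerFrame, ← Fin.succ_last]
  · simp [cornerFrame, ← Fin.succ_last]

lemma innerPart_cornerFrame (v : Fin n → Fin n → ℤ) : innerPart (cornerFrame v) = v := by
  funext i j
  simp [innerPart, cornerFrame]

lemma HasCornerBoundary.cornerFrame_innerPart {d : Fin (n + 2) → Fin (n + 2) → ℤ}
    (hd : HasCornerBoundary d) : cornerFrame (innerPart d) = d := by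
  have hframe := hasCornerBoundary_cornerFrame (innerPart d)
  funext i j
  cases i using Fin.cases with
  | zero => rw [hframe.top, hd.top]
  | succ i =>
    cases i using Fin.lastCases with
    | last => rw [Fin.succ_last, hframe.bottom, hd.bottom]
    | cast i =>
      cases j using Fin.cases with
      | zero => rw [hframe.left, hd.left]
      | succ j =>
        cases j using Fin.lastCases with
        | last => rw [Fin.succ_last, hframe.right, hd.right]
        | cast j => exact congrFun₂ (innerPart_cornerFrame (innerPart d)) i j

lemma Interlaces.innerPart_mem_succRange {c : Fin (n + 1) → Fin (n + 1) → ℤ}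
    {d : Fin (n + 2) → Fin (n + 2) → ℤ} (h : Interlaces c d) (i j : Fin n) :
    innerPart d i j ∈ succRange c i j := by
  rw [interlaces_iff] at h
  have := h i.castSucc j.castSucc
  have := h i.castSucc j.succ
  have := h i.succ j.castSucc
  have := h i.succ j.succ
  simp only [mem_succRange, innerPart, Fin.succ_castSucc] at *
  lia

lemma HasCornerBoundary.interlaces_of_innerPart_mem {c : Fin (n + 1) → Fin (n + 1) → ℤ}
    {d : Fin (n + 2) → Fin (n + 2) → ℤ} (hd : HasCornerBoundary d) (hc : HasCornerBoundary c)
    (h : ∀ i j, innerPart d i j ∈ succRange c i j) : Interlaces c d := by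
  simp only [mem_succRange, innerPart] at h
  refine interlaces_iff.2 fun i j => ⟨⟨?_, ?_⟩, ?_, ?_⟩
  · cases i using Fin.cases with
    | zero => simp [hd.top, hc.top]
    | succ i =>
      cases j using Fin.cases with
      | zero => simp [hd.left, hc.left]
      | succ j => exact (h i j).2.1
  · cases i using Fin.lastCases with
    | last => simp [hd.bottom, hc.bottom]
    | cast i =>
      cases j using Fin.lastCases with
      | last => simp [hd.right, hc.right]
      | cast j => have := (h i j).2.2; simp only [Fin.succ_castSucc]; lia
  · cases i using Fin.cases with
    | zero => simp [hd.top, hc.top]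
    | succ i =>
      cases j using Fin.lastCases with
      | last => simp [hd.right, hc.right]
      | cast j => exact (h i j).1.2
  · cases i using Fin.lastCases with
    | last => simp [hd.bottom, hc.bottom]
    | cast i =>
      cases j using Fin.cases with
      | zero => simp [hd.left, hc.left]
      | succ j => exact (h i j).1.1

end Interlacing

section Weights

variable {R : Type*} [CommSemiring R] {n : ℕ}

/-- The weight of a cell of a corner-sum matrix with diagonal increment `s` and mixed second
difference `e`: cells with `s = 2` are the generalized inversions, cells with `e = -1` are the
entries `-1` of the alternating sign matrix. -/
def cellWeight (x : R) (s e : ℤ) : R :=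
  (if s = 2 then x else 1) * (x + 1) ^ (-e).toNat

lemma sum_Icc_pow_eq_cellWeight (x : R) {a b c d : ℤ} (hab : a ≤ b ∧ b ≤ a + 1)
    (hac : a ≤ c ∧ c ≤ a + 1) (hbd : b ≤ d ∧ d ≤ b + 1) (hcd : c ≤ d ∧ d ≤ c + 1) :
    ∑ v ∈ Icc (max a (d - 1)) (min b c), x ^ (v - a).toNat =
      cellWeight x (d - a) (a + d - b - c) := by
  by_cases h : b = a + 1 ∧ c = a + 1
  · obtain ⟨rfl, rfl⟩ := h
    obtain rfl | rfl : d = a + 1 ∨ d = a + 2 := by lia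
    · rw [show Icc (max a (a + 1 - 1)) (min (a + 1) (a + 1)) = {a, a + 1} by grind]
      simp [cellWeight, add_comm]
    · rw [show Icc (max a (a + 2 - 1)) (min (a + 1) (a + 1)) = {a + 1} by grind]
      simp [cellWeight, show (a + 1 - (a + 2 - 1)).toNat = 0 by lia]
  · rw [show Icc (max a (d - 1)) (min b c) = {a} by grind, sum_singleton]
    simp only [cellWeight, show (-(a + d - b - c)).toNat = 0 by lia, show d - a ≠ 2 by lia]
    simp

lemma sum_Icc_pow_eq_cellWeight_neg (x : R) {a b c d : ℤ} (hab : a ≤ b ∧ b ≤ a + 1)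
    (hac : a ≤ c ∧ c ≤ a + 1) (hbd : b ≤ d ∧ d ≤ b + 1) (hcd : c ≤ d ∧ d ≤ c + 1) :
    ∑ v ∈ Icc (max b c) (min d (a + 1)), x ^ (d - v).toNat =
      cellWeight x (d - a) (-(a + d - b - c)) := by
  -- The reflection `v ↦ a + d - v` exchanges the two kinds of local sums.
  calc ∑ v ∈ Icc (max b c) (min d (a + 1)), x ^ (d - v).toNat
      = ∑ v ∈ Icc (max a (d - 1)) (min (a + d - b) (a + d - c)), x ^ (v - a).toNat :=
        sum_equiv (Equiv.subLeft (a + d))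
          (fun v => by simp only [mem_Icc, Equiv.subLeft_apply]; lia)
          fun v _ => by simp only [Equiv.subLeft_apply]; congr 2; ring
    _ = cellWeight x (d - a) (a + d - (a + d - b) - (a + d - c)) :=
        sum_Icc_pow_eq_cellWeight x (by lia) (by lia) (by lia) (by lia)
    _ = cellWeight x (d - a) (-(a + d - b - c)) := by congr 1; ring

/-- The weight of a corner-sum matrix: the product of the weights of its cells. -/
def cornerWeight (x : R) (c : Fin (n + 1) → Fin (n + 1) → ℤ) : R :=
  ∏ i, ∏ j, cellWeight x (diagDiff c i j) (mixedDiff c i j)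

/-- The weight of an interlacing pair of corner-sum matrices of consecutive sizes. Interlacing makes
the exponents nonnegative, so that `Int.toNat` does not truncate. -/
def pairWeight (x : R) (c : Fin (n + 1) → Fin (n + 1) → ℤ)
    (d : Fin (n + 2) → Fin (n + 2) → ℤ) : R :=
  ∏ i, ∏ j, x ^ (c i j - d i.castSucc j.castSucc).toNat

lemma sum_piFinset_piFinset_prod_prod {ι κ α : Type*} [Fintype ι] [DecidableEq ι] [Fintype κ]
    [DecidableEq κ] (s : ι → κ → Finset α) (f : ι → κ → α → R) :
    ∑ a ∈ Fintype.piFinset fun i => Fintype.piFinset (s i), ∏ i, ∏ j, f i j (a i j) =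
      ∏ i, ∏ j, ∑ v ∈ s i j, f i j v := by
  simp only [prod_univ_sum]

lemma IsCornerSum.prod_cellWeight_neg {c : Fin (n + 1) → Fin (n + 1) → ℤ} (hc : IsCornerSum c)
    (x : R) : ∏ i, ∏ j, cellWeight x (diagDiff c i j) (-mixedDiff c i j) =
      (x + 1) ^ n * cornerWeight x c := by
  have hexponent : ∑ i, ∑ j, (mixedDiff c i j).toNat =
      n + ∑ i, ∑ j, (-mixedDiff c i j).toNat := by
    zify
    rw [← hc.sum_mixedDiff]
    simp only [← sum_add_distrib]
    exact sum_congr rfl fun i _ => sum_congr rfl fun j _ => by lia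
  simp only [cornerWeight, cellWeight, neg_neg, prod_mul_distrib, prod_pow_eq_pow_sum, hexponent,
    pow_add]
  ring

open Classical in
lemma IsCornerSum.sum_pairWeight_left (x : R) {d : Fin (n + 2) → Fin (n + 2) → ℤ}
    (hd : IsCornerSum d) :
    ∑ c ∈ cornerSums n with Interlaces c d, pairWeight x c d = cornerWeight x d := by
  have hset : {c ∈ cornerSums n | Interlaces c d} =
      Fintype.piFinset fun i => Fintype.piFinset (predRange d i) := by
    ext c
    simp only [mem_filter, mem_cornerSums, Fintype.mem_piFinset]
    exact and_iff_right_of_imp fun h => h.isCornerSum_left hd.toHasCornerBoundary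
  calc ∑ c ∈ cornerSums n with Interlaces c d, pairWeight x c d
      = ∏ i, ∏ j, ∑ v ∈ predRange d i j, x ^ (v - d i.castSucc j.castSucc).toNat := by
        rw [hset]
        exact sum_piFinset_piFinset_prod_prod _
          fun (i j : Fin (n + 1)) v => x ^ (v - d i.castSucc j.castSucc).toNat
    _ = cornerWeight x d :=
        prod_congr rfl fun i _ => prod_congr rfl fun j _ =>
          sum_Icc_pow_eq_cellWeight x (hd.row _ _) (hd.col _ _) (hd.col _ _) (hd.row _ _)

lemma pairWeight_eq_prod_innerPart (x : R) {c : Fin (n + 1) → Fin (n + 1) → ℤ}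
    {d : Fin (n + 2) → Fin (n + 2) → ℤ} (hc : HasCornerBoundary c) (hd : HasCornerBoundary d) :
    pairWeight x c d = ∏ i, ∏ j, x ^ (c i.succ j.succ - innerPart d i j).toNat := by
  simp [pairWeight, Fin.prod_univ_succ, hc.left, hc.top, hd.left, hd.top, innerPart]

open Classical in
lemma IsCornerSum.sum_pairWeight_right (x : R) {c : Fin (n + 1) → Fin (n + 1) → ℤ}
    (hc : IsCornerSum c) :
    ∑ d ∈ cornerSums (n + 1) with Interlaces c d, pairWeight x c d =
      (x + 1) ^ n * cornerWeight x c := by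
  have hcb := hc.toHasCornerBoundary
  calc ∑ d ∈ cornerSums (n + 1) with Interlaces c d, pairWeight x c d
      = ∑ v ∈ Fintype.piFinset fun i => Fintype.piFinset (succRange c i),
          ∏ i, ∏ j, x ^ (c i.succ j.succ - v i j).toNat := by
        refine sum_nbij' innerPart cornerFrame ?_ ?_ ?_ ?_ ?_ <;>
          simp only [mem_filter, mem_cornerSums, Fintype.mem_piFinset, and_imp]
        · exact fun d _ h => h.innerPart_mem_succRange
        · intro v hv
          have hvb := hasCornerBoundary_cornerFrame v
          have h : Interlaces c (cornerFrame v) :=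
            hvb.interlaces_of_innerPart_mem hcb (by rwa [innerPart_cornerFrame])
          exact ⟨h.isCornerSum_right hvb, h⟩
        · exact fun d hd _ => hd.cornerFrame_innerPart
        · exact fun v _ => innerPart_cornerFrame v
        · exact fun d hd _ => pairWeight_eq_prod_innerPart x hcb hd.toHasCornerBoundary
    _ = ∏ i, ∏ j, ∑ v ∈ succRange c i j, x ^ (c i.succ j.succ - v).toNat :=
        sum_piFinset_piFinset_prod_prod _ fun (i j : Fin n) v => x ^ (c i.succ j.succ - v).toNat
    _ = ∏ i, ∏ j, cellWeight x (diagDiff c i j) (-mixedDiff c i j) :=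
        prod_congr rfl fun i _ => prod_congr rfl fun j _ =>
          sum_Icc_pow_eq_cellWeight_neg x (hc.row _ _) (hc.col _ _) (hc.col _ _) (hc.row _ _)
    _ = (x + 1) ^ n * cornerWeight x c := hc.prod_cellWeight_neg x

lemma sum_cornerWeight_succ (n : ℕ) (x : R) :
    ∑ d ∈ cornerSums (n + 1), cornerWeight x d =
      (x + 1) ^ n * ∑ c ∈ cornerSums n, cornerWeight x c := by
  classical
  calc ∑ d ∈ cornerSums (n + 1), cornerWeight x d
      = ∑ d ∈ cornerSums (n + 1), ∑ c ∈ cornerSums n with Interlaces c d, pairWeight x c d :=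
        sum_congr rfl fun d hd => ((mem_cornerSums.1 hd).sum_pairWeight_left x).symm
    _ = ∑ c ∈ cornerSums n, ∑ d ∈ cornerSums (n + 1) with Interlaces c d, pairWeight x c d :=
        sum_comm' (by simp only [mem_filter]; tauto)
    _ = ∑ c ∈ cornerSums n, (x + 1) ^ n * cornerWeight x c :=
        sum_congr rfl fun c hc => (mem_cornerSums.1 hc).sum_pairWeight_right x
    _ = (x + 1) ^ n * ∑ c ∈ cornerSums n, cornerWeight x c := (mul_sum _ _ _).symm

end Weights

section GeneratingFunction

variable {n : ℕ}

lemma IsASM.muASM_eq_sum {A : Fin n → Fin n → ℤ} (hA : IsASM A) :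
    muASM A = ∑ i, ∑ j, (-A i j).toNat := by
  rw [muASM, card_filter, Fintype.sum_prod_type]
  refine sum_congr rfl fun i _ => sum_congr rfl fun j _ => ?_
  obtain h | h | h := hA.1 i j <;> simp [h]

lemma sum_inversions_eq (A : Fin n → Fin n → ℤ) :
    ∑ i, ∑ i', ∑ j, ∑ j', (if i < i' ∧ j' ≤ j then A i j * A i' j' else 0) =
      ∑ i', ∑ j, (∑ i with i < i', A i j) * ∑ j' with j' ≤ j, A i' j' := by
  rw [sum_comm]
  refine sum_congr rfl fun i' _ => ?_
  rw [sum_comm]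
  refine sum_congr rfl fun j _ => ?_
  rw [sum_mul_sum, sum_filter]
  refine sum_congr rfl fun i _ => ?_
  split_ifs with h <;> simp [h, sum_filter]

lemma IsCornerSum.rowStep_mul_colStep {c : Fin (n + 1) → Fin (n + 1) → ℤ} (hc : IsCornerSum c)
    (i j : Fin n) :
    (c i.castSucc j.succ - c i.castSucc j.castSucc) * (c i.succ j.succ - c i.castSucc j.succ) =
      if diagDiff c i j = 2 then 1 else 0 := by
  have hrow := hc.row i.castSucc j
  have hcol := hc.col i j.succ
  obtain h | h : c i.castSucc j.succ - c i.castSucc j.castSucc = 0 ∨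
      c i.castSucc j.succ - c i.castSucc j.castSucc = 1 := by lia
  · rw [h, zero_mul, if_neg (by rw [diagDiff]; lia)]
  · rw [h, one_mul, diagDiff]
    split_ifs <;> lia

lemma IsASM.nuASM_eq_sum {A : Fin n → Fin n → ℤ} (hA : IsASM A) :
    nuASM A = ∑ i, ∑ j, if diagDiff (cornerSum A) i j = 2 then 1 else 0 := by
  rw [nuASM, sum_inversions_eq]
  simp only [sum_filter_lt_col, sum_filter_le_row, hA.isCornerSum_cornerSum.rowStep_mul_colStep]
  exact_mod_cast Int.toNat_natCast (∑ i, ∑ j, if diagDiff (cornerSum A) i j = 2 then 1 else 0)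

lemma IsASM.cornerWeight_cornerSum {R : Type*} [CommSemiring R] (x : R) {A : Fin n → Fin n → ℤ}
    (hA : IsASM A) : cornerWeight x (cornerSum A) = x ^ nuASM A * (x + 1) ^ muASM A := by
  simp only [cornerWeight, cellWeight, mixedDiff_cornerSum, hA.nuASM_eq_sum, hA.muASM_eq_sum,
    prod_mul_distrib, ← prod_pow_eq_pow_sum, pow_ite, pow_one, pow_zero]

variable {R : Type*} [CommRing R]

lemma Zun_self_add_one_eq_sum_cornerWeight (n : ℕ) (x : R) :
    Zun n x (x + 1) = ∑ c ∈ cornerSums n, cornerWeight x c := by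
  have hinj : Function.Injective fun e : Fin n → Fin n → Fin 3 => cornerSum (asmMat e) :=
    cornerSum_injective.comp asmMat_injective
  rw [cornerSums, sum_image hinj.injOn, sum_filter]
  simp only [Zun, Zqua, one_pow, mul_one]
  refine sum_congr rfl fun e _ => ?_
  split_ifs with he
  · exact (he.cornerWeight_cornerSum x).symm
  · rfl

lemma Zun_zero (x y : R) : Zun 0 x y = 1 := by
  simp [Zun, Zqua, IsASM, nuASM, muASM]

lemma Zun_self_add_one_eq_pow_sum_range (n : ℕ) (x : R) :
    Zun n x (x + 1) = (x + 1) ^ ∑ i ∈ range n, i := by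
  induction n with
  | zero => simp [Zun_zero]
  | succ n ih =>
    rw [Zun_self_add_one_eq_sum_cornerWeight, sum_cornerWeight_succ,
      ← Zun_self_add_one_eq_sum_cornerWeight, ih, sum_range_succ, pow_add, mul_comm]

end GeneratingFunction

/-- The unrefined ASM generating function at `y = x + 1`:
`Σ_A x^{ν(A)} (x+1)^{μ(A)} = (x+1)^{n(n-1)/2}`, stated for all values of the
variable in any commutative ring, equivalently as an identity of polynomials
in `ℤ[x]`. -/
theorem stmt13 {R : Type*} [CommRing R] (x : R) (n : ℕ) (hn : 1 ≤ n) :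
    Zun n x (x + 1) = (x + 1) ^ (n * (n - 1) / 2) := by
  rw [Zun_self_add_one_eq_pow_sum_range, sum_range_id]
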